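/- A function f : SL(2,ℂ) → ℂ that is the restriction of a polynomial in the four matrix entries satisfies f(g·u) = f(g) for all g ∈ SL(2,ℂ) and all upper triangular u with unit diagonal if and only if there exists a polynomial Φ ∈ ℂ[s,t] with f(g) = Φ(g₁₁, g₂₁) for all g ∈ SL(2,ℂ); moreover this Φ is unique, i.e. the functions g ↦ g₁₁ and g ↦ g₂₁ are algebraically independent over ℂ as functions on SL(2,ℂ). -/

import Mathlib

open Matrix

/-- Evaluation of a polynomial in the four matrix entries at a `2 × 2` matrix. -/
noncomputable def evalMat (F : MvPolynomial (Fin 2 × Fin 2) ℂ)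
    (M : Matrix (Fin 2) (Fin 2) ℂ) : ℂ :=
  MvPolynomial.eval (fun p => M p.1 p.2) F

/-!
Over the fraction field, a transvection carries a matrix `g` with `g i 0 ≠ 0` to one whose second
column vanishes in row `i`. The determinant then determines the second column from the first, with
denominator `g i 0`, so on this chart an invariant is a polynomial in the first column divided by
a power of `g i 0`. The two charts `i = 0, 1` cover the group. Since the first columns are Zariski
dense in the plane, `P / X₀ ^ N = Q / X₁ ^ M` holds as an identity of rational functions, and as
`X₀` and `X₁` are non-associated primes, both sides are a polynomial.
-/

open MvPolynomial
open scoped MatrixGroups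

/-- Evaluation of a polynomial in the entries of an `m × n` matrix at a matrix over an algebra:
`evalMat` for arbitrary coefficients, sizes and extensions of scalars. -/
noncomputable def aevalEntries {R A m n : Type*} [CommSemiring R] [CommSemiring A] [Algebra R A]
    (M : Matrix m n A) : MvPolynomial (m × n) R →ₐ[R] A :=
  aeval fun p ↦ M p.1 p.2

/-- Invariance of the function on `SL(2, R)` defined by `F` under right multiplication by the
upper unitriangular matrices, written as the transvections `1 + t E₁₂`. -/
def IsRightUnipotentInvariant {R : Type*} [CommRing R] (F : MvPolynomial (Fin 2 × Fin 2) R) :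
    Prop :=
  ∀ (g : SL(2, R)) (t : R), aevalEntries (g.1 * transvection 0 1 t) F = aevalEntries g.1 F

lemma map_aevalEntries {R A B m n : Type*} [CommSemiring R] [CommSemiring A] [CommSemiring B]
    [Algebra R A] [Algebra R B] (φ : A →ₐ[R] B) (M : Matrix m n A) (F : MvPolynomial (m × n) R) :
    φ (aevalEntries M F) = aevalEntries (M.map φ) F :=
  comp_aeval_apply _ φ F

lemma map_aeval_map_C_mul_transvection_X {R A n : Type*} [CommRing R] [CommRing A] [Algebra R A]
    [Fintype n] [DecidableEq n] (M : Matrix n n R) (i j : n) (t : A) :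
    (M.map Polynomial.C * transvection i j Polynomial.X).map (Polynomial.aeval t) =
      M.map (algebraMap R A) * transvection i j t := by
  have hC : Polynomial.aeval t ∘ Polynomial.C = algebraMap R A :=
    funext fun r ↦ Polynomial.aeval_C t r
  simp [transvection, Matrix.map_mul, Matrix.map_add, Matrix.map_map, hC]

lemma exists_pow_mul_aeval_eq {σ R A B : Type*} [CommSemiring R] [CommSemiring A]
    [CommSemiring B] [Algebra R A] [Algebra R B] (s : B) (f : σ → B) (F : MvPolynomial σ R) :
    ∃ (N : ℕ) (b : B), ∀ (φ : B →ₐ[R] A) (v : σ → A),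
      (∀ i, φ s * v i = φ (f i)) → φ s ^ N * aeval v F = φ b := by
  induction F using MvPolynomial.induction_on with
  | C a => exact ⟨0, algebraMap R B a, by simp⟩
  | add F G hF hG =>
    obtain ⟨N, b, hb⟩ := hF
    obtain ⟨M, c, hc⟩ := hG
    refine ⟨N + M, s ^ M * b + s ^ N * c, fun φ v hv ↦ ?_⟩
    simp only [map_add, map_mul, map_pow, ← hb φ v hv, ← hc φ v hv]
    ring
  | mul_X F i hF =>
    obtain ⟨N, b, hb⟩ := hF
    refine ⟨N + 1, b * f i, fun φ v hv ↦ ?_⟩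
    simp only [map_mul, aeval_X, ← hb φ v hv, ← hv i]
    ring

lemma exists_eq_pow_mul_and_eq_mul_of_prime {M : Type*} [CommMonoidWithZero M]
    [IsCancelMulZero M] {p q a b : M} (hp : Prime p) (hq : ¬ p ∣ q) {n : ℕ}
    (h : q * a = p ^ n * b) : ∃ c, a = p ^ n * c ∧ b = q * c := by
  obtain ⟨c, rfl⟩ := hp.pow_dvd_of_dvd_mul_left n hq ⟨b, h⟩
  refine ⟨c, rfl, mul_left_cancel₀ (pow_ne_zero n hp.ne_zero) ?_⟩
  rw [← h, mul_left_comm]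

section CommRing

variable {R : Type*} [CommRing R]

lemma sl2_row_minor (g : SL(2, R)) (i k : Fin 2) :
    g i 0 * g k 1 - g i 1 * g k 0 = !![0, 1; -1, 0] i k := by
  have hdet : g 0 0 * g 1 1 - g 0 1 * g 1 0 = 1 := det_fin_two g.1 ▸ g.det_coe
  fin_cases i <;> fin_cases k
  · simp [mul_comm]
  · simpa using hdet
  · simp only [Fin.mk_one, Fin.zero_eta, of_apply, cons_val_one, cons_val_zero]
    linear_combination -hdet
  · simp [mul_comm]

lemma sl2_mul_mul_transvection_apply (g : SL(2, R)) {i : Fin 2} {t : R}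
    (ht : g i 0 * t = -g i 1) (k l : Fin 2) :
    g i 0 * (g.1 * transvection 0 1 t : Matrix _ _ R) k l =
      ![g i 0 * g k 0, !![0, 1; -1, 0] i k] l := by
  fin_cases l
  · simp
  · calc g i 0 * (g.1 * transvection 0 1 t : Matrix _ _ R) k 1
        = g i 0 * (g k 1 + t * g k 0) := by rw [mul_transvection_apply_same]
      _ = !![0, 1; -1, 0] i k := by linear_combination sl2_row_minor g i k + g k 0 * ht

lemma isRightUnipotentInvariant_of_unitriangular {F : MvPolynomial (Fin 2 × Fin 2) R}
    (h : ∀ (g : SL(2, R)) (u : Matrix (Fin 2) (Fin 2) R),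
      (∀ k, u k k = 1) → (∀ k l : Fin 2, l < k → u k l = 0) →
      aevalEntries (g.1 * u) F = aevalEntries g.1 F) :
    IsRightUnipotentInvariant F := by
  intro g t
  refine h g _ (fun k ↦ ?_) (fun k l hlk ↦ ?_)
  · fin_cases k <;> simp [transvection]
  · obtain ⟨rfl, rfl⟩ : k = 1 ∧ l = 0 := by omega
    simp [transvection]

lemma aevalEntries_mul_eq_of_eq_eval_firstCol {F : MvPolynomial (Fin 2 × Fin 2) R}
    {Φ : MvPolynomial (Fin 2) R}
    (hΦ : ∀ g : SL(2, R), aevalEntries g.1 F = eval (fun s ↦ g s 0) Φ)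
    (g : SL(2, R)) {u : Matrix (Fin 2) (Fin 2) R} (hdiag : ∀ k, u k k = 1)
    (htri : ∀ k l : Fin 2, l < k → u k l = 0) :
    aevalEntries (g.1 * u) F = aevalEntries g.1 F := by
  have hu : u 1 0 = 0 := htri 1 0 Fin.zero_lt_one
  have hdet : u.det = 1 := by simp [det_fin_two, hdiag, hu]
  obtain ⟨v, rfl⟩ : ∃ v : SL(2, R), v.1 = u := ⟨⟨u, hdet⟩, rfl⟩
  have hcol : (fun s ↦ (g * v) s 0) = fun s ↦ g s 0 := by
    ext s
    simp [mul_apply, hdiag, hu]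
  rw [← Matrix.SpecialLinearGroup.coe_mul, hΦ, hΦ, hcol]

end CommRing

section Domain

variable {R : Type*} [CommRing R] [IsDomain R] [Infinite R]

/- For fixed `y ≠ 0` the columns `(1 + x y, y)`, `x ∈ R`, already determine a polynomial in the
first variable. -/
lemma eq_zero_of_forall_eval_firstCol_eq_zero {Φ : MvPolynomial (Fin 2) R}
    (h : ∀ g : SL(2, R), eval (fun s ↦ g s 0) Φ = 0) : Φ = 0 := by
  suffices X 1 * Φ = 0 from (mul_eq_zero.mp this).resolve_left (X_ne_zero 1)
  refine MvPolynomial.funext fun v ↦ ?_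
  rcases eq_or_ne (v 1) 0 with hv | hv
  · simp [hv]
  let q : Polynomial R := aeval ![Polynomial.X, Polynomial.C (v 1)] Φ
  have eval_q (a : R) : q.eval a = eval ![a, v 1] Φ := by
    rw [← Polynomial.coe_aeval_eq_eval, comp_aeval_apply, ← aeval_eq_eval]
    congr 2
    ext s
    fin_cases s <;> simp
  have hroot (x : R) : q.IsRoot (1 + x * v 1) := by
    let g : SL(2, R) := ⟨!![1 + x * v 1, x; v 1, 1], by simp [det_fin_two]⟩
    have hg : (fun s ↦ g s 0) = ![1 + x * v 1, v 1] := by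
      ext s
      fin_cases s <;> rfl
    rw [Polynomial.IsRoot, eval_q, ← hg, h g]
  have hinj : Function.Injective fun x ↦ 1 + x * v 1 :=
    (add_right_injective 1).comp (mul_left_injective₀ hv)
  have hq : q = 0 := q.eq_zero_of_infinite_isRoot <|
    (Set.infinite_range_of_injective hinj).mono (Set.range_subset_iff.mpr hroot)
  have hΦ : eval v Φ = 0 := by
    have hv_eta : v = ![v 0, v 1] := (FinVec.etaExpand_eq v).symm
    rw [hv_eta, ← eval_q, hq, Polynomial.eval_zero]
  simp [hΦ]

lemma eq_of_forall_eval_firstCol_eq {P Q : MvPolynomial (Fin 2) R}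
    (h : ∀ g : SL(2, R), eval (fun s ↦ g s 0) P = eval (fun s ↦ g s 0) Q) : P = Q :=
  sub_eq_zero.mp <| eq_zero_of_forall_eval_firstCol_eq_zero fun g ↦ by
    rw [map_sub, h g, sub_self]

namespace IsRightUnipotentInvariant

variable {F : MvPolynomial (Fin 2 × Fin 2) R}

/- A polynomial in `t` that is constant on the infinite domain `R` is constant. -/
lemma aevalEntries_map_mul_transvection (hF : IsRightUnipotentInvariant F) (g : SL(2, R))
    {A : Type*} [CommRing A] [Algebra R A] (t : A) :
    aevalEntries (g.1.map (algebraMap R A) * transvection 0 1 t) F =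
      algebraMap R A (aevalEntries g.1 F) := by
  let q : Polynomial R :=
    aevalEntries (g.1.map Polynomial.C * transvection 0 1 Polynomial.X) F
  have hq : q = Polynomial.C (aevalEntries g.1 F) := Polynomial.funext fun r ↦ by
    rw [← Polynomial.coe_aeval_eq_eval, map_aevalEntries, map_aeval_map_C_mul_transvection_X,
      Polynomial.aeval_C]
    exact hF g r
  rw [← map_aeval_map_C_mul_transvection_X, ← map_aevalEntries]
  exact (congrArg (Polynomial.aeval t) hq).trans (Polynomial.aeval_C t _)

lemma exists_pow_mul_aevalEntries_eq (hF : IsRightUnipotentInvariant F) (i : Fin 2) :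
    ∃ (N : ℕ) (P : MvPolynomial (Fin 2) R), ∀ g : SL(2, R),
      g i 0 ^ N * aevalEntries g.1 F = eval (fun s ↦ g s 0) P := by
  let K := FractionRing R
  let ι : R →+* K := algebraMap R K
  let f (p : Fin 2 × Fin 2) : MvPolynomial (Fin 2) R :=
    ![X i * X p.1, !![0, 1; -1, 0] i p.1] p.2
  obtain ⟨N, P, hP⟩ := exists_pow_mul_aeval_eq (A := K) (X i) f F
  refine ⟨N + 1, X i * P, fun g ↦ ?_⟩
  rcases eq_or_ne (g i 0) 0 with hg | hg
  · simp [hg]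
  suffices g i 0 ^ N * aevalEntries g.1 F = eval (fun s ↦ g s 0) P by
    rw [map_mul, eval_X, ← this, pow_succ', mul_assoc]
  have hι : Function.Injective ι := IsFractionRing.injective R K
  let γ : SL(2, K) := Matrix.SpecialLinearGroup.map ι g
  let t : K := -γ i 1 / γ i 0
  have ht : γ i 0 * t = -γ i 1 := mul_div_cancel₀ _ ((map_ne_zero_iff ι hι).mpr hg)
  let φ : MvPolynomial (Fin 2) R →ₐ[R] K := aeval fun s ↦ γ s 0
  have hφX (s : Fin 2) : φ (X s) = γ s 0 := aeval_X _ s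
  have hentry (p : Fin 2 × Fin 2) :
      φ (X i) * (γ.1 * transvection 0 1 t : Matrix _ _ K) p.1 p.2 = φ (f p) := by
    obtain ⟨k, l⟩ := p
    rw [hφX, sl2_mul_mul_transvection_apply γ ht]
    fin_cases l
    · simp [f, hφX]
    · fin_cases i <;> fin_cases k <;> simp [f]
  apply hι
  calc ι (g i 0 ^ N * aevalEntries g.1 F)
      = γ i 0 ^ N * ι (aevalEntries g.1 F) := by rw [map_mul, map_pow]; rfl
    _ = φ (X i) ^ N * aevalEntries (γ.1 * transvection 0 1 t) F := by
        rw [hφX, ← hF.aevalEntries_map_mul_transvection g t]; rfl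
    _ = φ P := hP φ _ hentry
    _ = ι (eval (fun s ↦ g s 0) P) := aeval_algebraMap_apply K (fun s ↦ g s 0) P

theorem exists_aevalEntries_eq_eval_firstCol (hF : IsRightUnipotentInvariant F) :
    ∃ Φ : MvPolynomial (Fin 2) R, ∀ g : SL(2, R),
      aevalEntries g.1 F = eval (fun s ↦ g s 0) Φ := by
  obtain ⟨N, P, hP⟩ := hF.exists_pow_mul_aevalEntries_eq 0
  obtain ⟨M, Q, hQ⟩ := hF.exists_pow_mul_aevalEntries_eq 1
  have hPQ : X 1 ^ M * P = X 0 ^ N * Q := eq_of_forall_eval_firstCol_eq fun g ↦ by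
    simp only [map_mul, map_pow, eval_X, ← hP, ← hQ]
    ring
  have hX : ¬ (X 0 : MvPolynomial (Fin 2) R) ∣ X 1 ^ M := fun h ↦ by
    simpa [X_dvd_X] using X_prime.dvd_of_dvd_pow h
  obtain ⟨Φ, rfl, rfl⟩ := exists_eq_pow_mul_and_eq_mul_of_prime X_prime hX hPQ
  refine ⟨Φ, fun g ↦ ?_⟩
  simp only [map_mul, map_pow, eval_X] at hP hQ
  by_cases h₀ : g 0 0 = 0
  · have h₁ : g 1 0 ≠ 0 := fun h₁ ↦ by simpa [h₀, h₁] using sl2_row_minor g 0 1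
    exact mul_left_cancel₀ (pow_ne_zero M h₁) (hQ g)
  · exact mul_left_cancel₀ (pow_ne_zero N h₀) (hP g)

end IsRightUnipotentInvariant

theorem sl2_right_invariants_general (F : MvPolynomial (Fin 2 × Fin 2) R) :
    ((∀ (g : SL(2, R)) (u : Matrix (Fin 2) (Fin 2) R),
        (∀ k, u k k = 1) → (∀ k l : Fin 2, l < k → u k l = 0) →
        aevalEntries (g.1 * u) F = aevalEntries g.1 F) ↔
      ∃ Φ : MvPolynomial (Fin 2) R, ∀ g : SL(2, R),
        aevalEntries g.1 F = eval (fun s ↦ g s 0) Φ) ∧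
    ∀ Φ : MvPolynomial (Fin 2) R, (∀ g : SL(2, R), eval (fun s ↦ g s 0) Φ = 0) → Φ = 0 :=
  ⟨⟨fun h ↦ (isRightUnipotentInvariant_of_unitriangular h).exists_aevalEntries_eq_eval_firstCol,
    fun ⟨_, hΦ⟩ g _ ↦ aevalEntries_mul_eq_of_eq_eval_firstCol hΦ g⟩,
    fun _ ↦ eq_zero_of_forall_eval_firstCol_eq_zero⟩

end Domain

/-- A polynomial function on `SL(2, ℂ)` is invariant under right multiplication
by upper triangular matrices with unit diagonal if and only if it is a
polynomial `Φ` in the first-column entries `g₁₁, g₂₁`; moreover such a `Φ` is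
unique, i.e. `g ↦ g₁₁` and `g ↦ g₂₁` are algebraically independent over `ℂ`
as functions on `SL(2, ℂ)`. -/
theorem sl2_right_invariants (F : MvPolynomial (Fin 2 × Fin 2) ℂ) :
    ((∀ (g : Matrix.SpecialLinearGroup (Fin 2) ℂ) (u : Matrix (Fin 2) (Fin 2) ℂ),
        (∀ k, u k k = 1) → (∀ k l : Fin 2, l < k → u k l = 0) →
        evalMat F ((g : Matrix (Fin 2) (Fin 2) ℂ) * u) =
          evalMat F (g : Matrix (Fin 2) (Fin 2) ℂ)) ↔
      (∃ Φ : MvPolynomial (Fin 2) ℂ,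
        ∀ g : Matrix.SpecialLinearGroup (Fin 2) ℂ,
          evalMat F (g : Matrix (Fin 2) (Fin 2) ℂ) =
            MvPolynomial.eval (fun s : Fin 2 => (g : Matrix (Fin 2) (Fin 2) ℂ) s 0) Φ)) ∧
    (∀ Φ : MvPolynomial (Fin 2) ℂ,
      (∀ g : Matrix.SpecialLinearGroup (Fin 2) ℂ,
        MvPolynomial.eval (fun s : Fin 2 => (g : Matrix (Fin 2) (Fin 2) ℂ) s 0) Φ = 0) →
      Φ = 0) :=
  sl2_right_invariants_general F
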